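/- Let G be a Lie algebra over a field k, let U be a G-module (with action of X ∈ G on u ∈ U written X·u), and let O : U → G be a linear map satisfying O(O(u)·v − O(v)·u) = [O(u), O(v)] for all u, v ∈ U. Then the bilinear operation [u, v] := O(u)·v − O(v)·u makes U into a Lie algebra; in particular the Jacobi identity [[u, v], w] + [[v, w], u] + [[w, u], v] = 0 holds for all u, v, w ∈ U. -/

import Mathlib

/-!
The product `u ∘ v = ⁅O u, v⁆` is left pre-Lie: its bracket `u ∘ v - v ∘ u` is sent by `O` to
`⁅O u, O v⁆`, so it acts on the left as the commutator of the operators `u ∘ ·` and `v ∘ ·`.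
Expanding `[[u, v], w]` in this way gives `u ∘ (v ∘ w) - v ∘ (u ∘ w) - w ∘ (u ∘ v) + w ∘ (v ∘ u)`,
and in the cyclic sum every triple product occurs once with each sign.
-/

section OOperator

variable {L U : Type*} [LieRing L] [AddCommGroup U] [LieRingModule L U] {O : U → L}

/-- The bracket `[u, v] = O(u)·v − O(v)·u` that a map `O : U → L` induces on an `L`-module `U`. -/
def inducedBracket (O : U → L) (u v : U) : U :=
  ⁅O u, v⁆ - ⁅O v, u⁆

/-- The defining identity of an `O`-operator. It is a predicate on plain functions: linearity, which
is part of the usual notion, is left to the type of `O`. -/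
def IsOOperator (O : U → L) : Prop :=
  ∀ u v : U, O (inducedBracket O u v) = ⁅O u, O v⁆

theorem IsOOperator.apply_inducedBracket_lie (hO : IsOOperator O) (u v w : U) :
    ⁅O (inducedBracket O u v), w⁆ = ⁅O u, ⁅O v, w⁆⁆ - ⁅O v, ⁅O u, w⁆⁆ := by
  rw [hO u v, lie_lie]

theorem IsOOperator.inducedBracket_inducedBracket (hO : IsOOperator O) (u v w : U) :
    inducedBracket O (inducedBracket O u v) w =
      ⁅O u, ⁅O v, w⁆⁆ - ⁅O v, ⁅O u, w⁆⁆ - (⁅O w, ⁅O u, v⁆⁆ - ⁅O w, ⁅O v, u⁆⁆) :=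
  calc inducedBracket O (inducedBracket O u v) w
    _ = ⁅O (inducedBracket O u v), w⁆ - ⁅O w, ⁅O u, v⁆ - ⁅O v, u⁆⁆ := rfl
    _ = _ := by rw [hO.apply_inducedBracket_lie, lie_sub]

theorem O_operator_gives_Lie_bracket_general (hO : IsOOperator O) (u v w : U) :
    inducedBracket O (inducedBracket O u v) w + inducedBracket O (inducedBracket O v w) u +
      inducedBracket O (inducedBracket O w u) v = 0 := by
  simp only [hO.inducedBracket_inducedBracket]
  abel

end OOperator

/-- **Proposition 2.18.** If `O : U → G` is an `O`-operator on a `G`-module `U`,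
then the bracket `[u, v] = O(u)·v − O(v)·u` makes `U` into a Lie algebra; in particular
the Jacobi identity holds. -/
theorem O_operator_gives_Lie_bracket (k : Type*) [Field k]
    (L : Type*) [LieRing L] [LieAlgebra k L]
    (U : Type*) [AddCommGroup U] [Module k U] [LieRingModule L U] [LieModule k L U]
    (O : U →ₗ[k] L)
    (hO : ∀ u v : U, O (⁅O u, v⁆ - ⁅O v, u⁆) = ⁅O u, O v⁆) :
    let br : U → U → U := fun u v => ⁅O u, v⁆ - ⁅O v, u⁆
    ∀ u v w : U, br (br u v) w + br (br v w) u + br (br w u) v = 0 :=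
  O_operator_gives_Lie_bracket_general (O := O) hO
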